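/- Let the block matrix A (of size n = n₁ + n₂) have entries a on the diagonal block positions of the first group, −b on entries from the first group to the second, −c from the second to the first, and d within the second group, where a,b,c,d > 0 and each row's absolute values sum to 1 (a·n₁ + b·n₂ = 1 and c·n₁ + d·n₂ = 1). For n₁ = 1, the characteristic polynomial of A is χ(λ) = (−λ)^(n−2)·(λ − 1)·(λ − q), where q = a − 1 + (n−1)d. -/

import Mathlib

open Polynomial

theorem stmt_13 (n₂ : ℕ) (hn₂ : 1 ≤ n₂) (n : ℕ) (hn : n = 1 + n₂)
    (a b c d : ℝ) (ha : 0 < a) (hb : 0 < b) (hc : 0 < c) (hd : 0 < d)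
    (hrow1 : a + n₂ * b = 1) (hrow2 : c + n₂ * d = 1)
    (A : Matrix (Fin n) (Fin n) ℝ)
    (hA : ∀ i j : Fin n, A i j =
      if i = (⟨0, by omega⟩ : Fin n) then
        (if j = (⟨0, by omega⟩ : Fin n) then a else -b)
      else
        (if j = (⟨0, by omega⟩ : Fin n) then -c else d))
    (q : ℝ) (hq : q = a - 1 + (n - 1 : ℝ) * d) :
    Matrix.charpoly A = X ^ (n - 2) * (X - 1) * (X - C q) := by
  obtain ⟨m, rfl⟩ : ∃ m, n = m + 1 := ⟨n₂, by omega⟩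
  obtain rfl : m = n₂ := by omega
  have h0 : ∀ h : 0 < m + 1, (⟨0, h⟩ : Fin (m + 1)) = 0 := fun _ => rfl
  simp only [h0] at hA
  let U : Matrix (Fin (m + 1)) (Fin 2) ℝ :=
    Matrix.of fun i k => if i = 0 then (if k = 0 then 1 else 0) else (if k = 0 then 0 else 1)
  let V : Matrix (Fin 2) (Fin (m + 1)) ℝ :=
    Matrix.of fun k j => if k = 0 then (if j = 0 then a else -b) else (if j = 0 then -c else d)
  have hUV : A = U * V := by
    ext i j
    rw [hA, Matrix.mul_apply, Fin.sum_univ_two]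
    by_cases hi : i = 0 <;> simp [U, V, hi]
  have hVU : V * U = !![a, -(m * b); -c, m * d] := by
    ext k l
    rw [Matrix.mul_apply, Fin.sum_univ_succ]
    fin_cases k <;> fin_cases l <;> simp [U, V]
  have key := Matrix.charpoly_mul_comm' U V
  have h2 : (V * U).charpoly = (X - 1) * (X - C q) := by
    rw [hVU, Matrix.charpoly_fin_two, Matrix.trace_fin_two_of, Matrix.det_fin_two_of]
    have e1 : a + m * d = 1 + q := by rw [hq]; push_cast; ring
    have e2 : a * (m * d) - -(m * b) * -c = q := by
      rw [hq]; push_cast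
      linear_combination (-c) * hrow1 + (a - 1) * hrow2 
    rw [e1, e2]
    simp only [C_add, C_1]
    ring
  rw [h2, ← hUV] at key
  simp only [Fintype.card_fin] at key
  have hX : (X : ℝ[X]) ^ 2 ≠ 0 := pow_ne_zero _ X_ne_zero
  apply mul_left_cancel₀ hX
  rw [key]
  have : m + 1 = 2 + (m + 1 - 2) := by omega
  generalize m + 1 - 2 = r at this
  rw [this, pow_add]
  ring
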